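/- arXiv:2102.09213 — 2 statements merged into one kernel-verified Lean document; each statement's English description precedes it below -/
import Mathlib

section
/- Let n ≥ 2, let q be the Lorentzian quadratic form q(x) = 2x₁x_{n+1} + x₂² + ⋯ + xₙ² on ℝ^{n+1}, and let o = e₁ − e_{n+1}. Let (s_k) be a sequence of reals, (v_k) a sequence in ℝ^{n−1}, and g_k = a^{s_k} ∘ n(v_k) ∈ O(1,n). Then: (1) if s_k → −∞, there exist scalars λ_k ∈ ℝ with λ_k · g_k⁻¹(o) → e₁; (2) if (s_k) converges in ℝ and ‖v_k‖ → ∞, there exist scalars λ_k with λ_k · g_k⁻¹(o) → e₁; (3) if s_k → +∞ and ‖v_k‖ → ∞, there exist scalars λ_k with λ_k · g_k⁻¹(o) → e₁; (4) if s_k → +∞ and v_k → v_∞ ∈ ℝ^{n−1}, there exist scalars λ_k with λ_k · g_k⁻¹(o) → n(v_∞)⁻¹(e_{n+1}), and the vector n(v_∞)⁻¹(e_{n+1}) is not proportional to e₁. (In the projective model, these statements say that g_k⁻¹·o converges in projective space to the boundary point p⁺ = [e₁] in cases (1)–(3), and to the boundary point n(v_∞)⁻¹·p⁻ ≠ p⁺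 in case (4), where p⁻ = [e_{n+1}].) -/
open Matrix Filter Topology Bornology

noncomputable section

/-- The Lorentzian quadratic form `q(x) = 2 x₁ x_{n+1} + x₂² + ⋯ + xₙ²` on `ℝ^{n+1}`
(coordinates indexed by `Fin (n+1)`, so `x₁` is `x 0` and `x_{n+1}` is `x (Fin.last n)`). -/
def lorQ (n : ℕ) (x : Fin (n + 1) → ℝ) : ℝ :=
  2 * x 0 * x (Fin.last n) +
    ∑ i : Fin (n + 1), if i ≠ 0 ∧ i ≠ Fin.last n then x i ^ 2 else 0

/-- The polar bilinear form `B` of `lorQ`. -/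
def lorB (n : ℕ) (x y : Fin (n + 1) → ℝ) : ℝ :=
  x 0 * y (Fin.last n) + x (Fin.last n) * y 0 +
    ∑ i : Fin (n + 1), if i ≠ 0 ∧ i ≠ Fin.last n then x i * y i else 0

/-- The Lorentz group `O(1,n)`: linear automorphisms of `ℝ^{n+1}` preserving `lorQ`. -/
def LorentzGrp (n : ℕ) : Subgroup (GL (Fin (n + 1)) ℝ) where
  carrier := {g | ∀ x, lorQ n ((g : Matrix (Fin (n + 1)) (Fin (n + 1)) ℝ).mulVec x) = lorQ n x}
  one_mem' := by intro x; simp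
  mul_mem' := by
    intro a b ha hb x
    have h : ((a * b : GL (Fin (n + 1)) ℝ) : Matrix (Fin (n + 1)) (Fin (n + 1)) ℝ).mulVec x
        = (a : Matrix (Fin (n + 1)) (Fin (n + 1)) ℝ).mulVec
            ((b : Matrix (Fin (n + 1)) (Fin (n + 1)) ℝ).mulVec x) := by
      rw [Matrix.mulVec_mulVec]; rfl
    rw [h, ha, hb]
  inv_mem' := by
    intro g hg x
    have h : (g : Matrix (Fin (n + 1)) (Fin (n + 1)) ℝ).mulVec
        ((↑g⁻¹ : Matrix (Fin (n + 1)) (Fin (n + 1)) ℝ).mulVec x) = x := by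
      rw [Matrix.mulVec_mulVec]
      have : (g : Matrix (Fin (n + 1)) (Fin (n + 1)) ℝ) * (↑g⁻¹ : Matrix (Fin (n + 1)) (Fin (n + 1)) ℝ)
          = (1 : Matrix (Fin (n + 1)) (Fin (n + 1)) ℝ) := by
        rw [← Units.val_mul, mul_inv_cancel, Units.val_one]
      rw [this, Matrix.one_mulVec]
    calc lorQ n ((↑g⁻¹ : Matrix (Fin (n + 1)) (Fin (n + 1)) ℝ).mulVec x)
        = lorQ n ((g : Matrix (Fin (n + 1)) (Fin (n + 1)) ℝ).mulVec
            ((↑g⁻¹ : Matrix (Fin (n + 1)) (Fin (n + 1)) ℝ).mulVec x)) := (hg _).symm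
      _ = lorQ n x := by rw [h]

/-- The action of an element of `O(1,n)` on a vector of `ℝ^{n+1}`. -/
def lorAct {n : ℕ} (g : LorentzGrp n) (x : Fin (n + 1) → ℝ) : Fin (n + 1) → ℝ :=
  ((g : GL (Fin (n + 1)) ℝ) : Matrix (Fin (n + 1)) (Fin (n + 1)) ℝ).mulVec x

/-- The base point `o = e₁ − e_{n+1}`, a timelike vector. -/
def basePt (n : ℕ) : Fin (n + 1) → ℝ := fun i =>
  if i = 0 then 1 else if i = Fin.last n then -1 else 0

/-- `u` is a limit direction of a subset `G` of `O(1,n)`: `u` is nonzero lightlike, and some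
sequence `λ_k • g_k⁻¹(o)`, with `g_k ∈ G`, converges to `u`. -/
def IsLimitDirection (n : ℕ) (G : Set (LorentzGrp n)) (u : Fin (n + 1) → ℝ) : Prop :=
  u ≠ 0 ∧ lorQ n u = 0 ∧
    ∃ (g : ℕ → LorentzGrp n) (lam : ℕ → ℝ), (∀ k, g k ∈ G) ∧
      Tendsto (fun k => lam k • lorAct (g k)⁻¹ (basePt n)) atTop (𝓝 u)

/-- A vector `v` is stable under `G ⊆ O(1,n)` if its `ρ`-orbit under `G` is bounded. -/
def IsStableVec {n : ℕ} {V : Type*} [NormedAddCommGroup V] [NormedSpace ℝ V]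
    (ρ : LorentzGrp n →* (V →L[ℝ] V)) (G : Set (LorentzGrp n)) (v : V) : Prop :=
  IsBounded {w : V | ∃ g ∈ G, w = ρ g v}

/-- `SO°(E)`: the identity component of the subgroup of `O(1,n)` of elements leaving `E`
invariant and fixing pointwise every vector orthogonal to `E`. -/
def SOIdComp (n : ℕ) (E : Submodule ℝ (Fin (n + 1) → ℝ)) : Set (LorentzGrp n) :=
  connectedComponentIn
    {g : LorentzGrp n |
      E.map ((g : GL (Fin (n + 1)) ℝ) : Matrix (Fin (n + 1)) (Fin (n + 1)) ℝ).mulVecLin = E ∧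
      ∀ x : Fin (n + 1) → ℝ, (∀ e ∈ E, lorB n x e = 0) → lorAct g x = x} 1

lemma lorAct_mul' {n : ℕ} (a b : LorentzGrp n) (x : Fin (n + 1) → ℝ) :
    lorAct (a * b) x = lorAct a (lorAct b x) := by
  simp [lorAct, Matrix.mulVec_mulVec]

lemma lorAct_inv_eq {n : ℕ} (a : LorentzGrp n) (x y : Fin (n + 1) → ℝ)
    (h : lorAct a x = y) : lorAct a⁻¹ y = x := by
  rw [← h, ← lorAct_mul', inv_mul_cancel]
  simp [lorAct]

lemma sum_aux (n : ℕ) (v : Fin (n + 1) → ℝ) (h0 : v 0 = 0) (h1 : v (Fin.last n) = 0)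
    (a b c : ℝ) :
    ∑ j, v j * (if j = 0 then a else if j = Fin.last n then b else c * v j)
      = c * ∑ j, v j * v j := by
  rw [Finset.mul_sum]
  refine Finset.sum_congr rfl fun j _ => ?_
  split_ifs with h h'
  · subst h; simp [h0]
  · subst h'; simp [h1]
  · ring

lemma lim_aux (n : ℕ) (hn : 2 ≤ n) (s : ℕ → ℝ) (v : ℕ → Fin (n + 1) → ℝ)
    (w : ℕ → Fin (n + 1) → ℝ)
    (hw : ∀ k, w k = fun i => if i = 0 then
      Real.exp (-s k) + (∑ j, v k j * v k j) / 2 * Real.exp (s k)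
      else if i = Fin.last n then -Real.exp (s k) else (-Real.exp (s k)) * v k i)
    (hR : Tendsto (fun k => Real.exp (-s k) ^ 2 + (∑ j, v k j * v k j) / 2) atTop atTop) :
    ∃ lam : ℕ → ℝ, Tendsto (fun k => lam k • w k) atTop
        (𝓝 (Pi.single (0 : Fin (n + 1)) (1 : ℝ))) := by
  set R : ℕ → ℝ := fun k => Real.exp (-s k) ^ 2 + (∑ j, v k j * v k j) / 2 with hRdef
  have hS : ∀ k, 0 ≤ ∑ j, v k j * v k j := fun k =>
    Finset.sum_nonneg fun j _ => mul_self_nonneg _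
  have hRpos : ∀ k, 0 < R k := fun k => by
    have := hS k
    simp only [hRdef]; positivity
  have hinv : Tendsto (fun k => (R k)⁻¹) atTop (𝓝 0) := hR.inv_tendsto_atTop
  have hE : ∀ k, Real.exp (-s k) * Real.exp (s k) = 1 := fun k => by
    rw [← Real.exp_add]; simp
  refine ⟨fun k => Real.exp (-s k) * (R k)⁻¹, ?_⟩
  rw [tendsto_pi_nhds]
  intro i
  by_cases hi : i = 0
  · subst hi
    refine tendsto_const_nhds.congr fun k => ?_
    have h := (hRpos k).ne'
    simp only [Pi.single_eq_same, hw, Pi.smul_apply, smul_eq_mul, if_true]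
    have h1 : R k = Real.exp (-s k) *
        (Real.exp (-s k) + (∑ j, v k j * v k j) / 2 * Real.exp (s k)) := by
      simp only [hRdef]
      linear_combination (-(∑ j, v k j * v k j) / 2) * hE k
    linear_combination (-1 : ℝ) * mul_inv_cancel₀ h + (R k)⁻¹ * h1
  rw [Pi.single_eq_of_ne hi]
  by_cases hl : i = Fin.last n
  · subst hl
    have := hinv.neg
    rw [neg_zero] at this
    refine this.congr fun k => ?_
    simp only [hw, Pi.smul_apply, smul_eq_mul, if_true, if_neg hi]
    linear_combination ((R k)⁻¹) * hE k
  · have h2 : Tendsto (fun k => ((R k)⁻¹ * v k i) ^ 2) atTop (𝓝 0) := by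
      have h3 : Tendsto (fun k => 2 * (R k)⁻¹) atTop (𝓝 0) := by
        simpa using hinv.const_mul 2
      refine squeeze_zero (fun k => sq_nonneg _) (fun k => ?_) h3
      have h4 : v k i * v k i ≤ ∑ j, v k j * v k j :=
        Finset.single_le_sum (f := fun j => v k j * v k j)
          (fun j _ => mul_self_nonneg _) (Finset.mem_univ i)
      have h5 : v k i ^ 2 ≤ 2 * R k := by
        have := sq_nonneg (Real.exp (-s k))
        simp only [hRdef]; nlinarith
      calc ((R k)⁻¹ * v k i) ^ 2 = ((R k)⁻¹) ^ 2 * v k i ^ 2 := by ring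
        _ ≤ ((R k)⁻¹) ^ 2 * (2 * R k) := by gcongr
        _ = 2 * (R k)⁻¹ := by
          have h := (hRpos k).ne'
          field_simp
    have h6 : Tendsto (fun k => (R k)⁻¹ * v k i) atTop (𝓝 0) := by
      have := h2.sqrt
      simp only [Real.sqrt_sq_eq_abs, Real.sqrt_zero] at this
      exact (tendsto_zero_iff_abs_tendsto_zero _).2 this
    have := h6.neg
    rw [neg_zero] at this
    refine this.congr fun k => ?_
    simp only [hw, Pi.smul_apply, smul_eq_mul, if_neg hi, if_neg hl]
    linear_combination ((R k)⁻¹ * v k i) * hE k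

/-- dynamical lemma in `O(1,n)`. Let `a^s` act by
`a^s e₁ = e^s e₁`, `a^s e_{n+1} = e^{-s} e_{n+1}`, `a^s eᵢ = eᵢ` otherwise, and for `v` supported
on the middle coordinates let `n(v)` act by
`n(v)(x₁, x', x_{n+1}) = (x₁ + ⟨v,x'⟩ − (⟨v,v⟩/2) x_{n+1}, x' − x_{n+1} v, x_{n+1})`.
Put `g_k = a^{s_k} ∘ n(v_k)`. Then, with `o = e₁ − e_{n+1}`:
(1) if `s_k → −∞`, then `λ_k • g_k⁻¹(o) → e₁` for suitable scalars `λ_k`;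
(2) if `(s_k)` converges and `‖v_k‖ → ∞`, idem;
(3) if `s_k → +∞` and `‖v_k‖ → ∞`, idem;
(4) if `s_k → +∞` and `v_k → v_∞`, then `λ_k • g_k⁻¹(o) → n(v_∞)⁻¹(e_{n+1})` for suitable
scalars, and `n(v_∞)⁻¹(e_{n+1})` is not proportional to `e₁`. -/
theorem lorentz_dynamical_lemma
    (n : ℕ) (hn : 2 ≤ n)
    (A : ℝ → LorentzGrp n)
    (hA : ∀ (s : ℝ) (x : Fin (n + 1) → ℝ), lorAct (A s) x = fun i =>
      if i = 0 then Real.exp s * x 0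
      else if i = Fin.last n then Real.exp (-s) * x (Fin.last n)
      else x i)
    (Nu : (Fin (n + 1) → ℝ) → LorentzGrp n)
    (hNu : ∀ v : Fin (n + 1) → ℝ, v 0 = 0 → v (Fin.last n) = 0 →
      ∀ x : Fin (n + 1) → ℝ, lorAct (Nu v) x = fun i =>
        if i = 0 then x 0 + (∑ j, v j * x j) - ((∑ j, v j * v j) / 2) * x (Fin.last n)
        else if i = Fin.last n then x (Fin.last n)
        else x i - x (Fin.last n) * v i)
    (s : ℕ → ℝ) (v : ℕ → Fin (n + 1) → ℝ)
    (hv : ∀ k, v k 0 = 0 ∧ v k (Fin.last n) = 0)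
    (g : ℕ → LorentzGrp n) (hg : ∀ k, g k = A (s k) * Nu (v k)) :
    (Tendsto s atTop atBot →
      ∃ lam : ℕ → ℝ, Tendsto (fun k => lam k • lorAct (g k)⁻¹ (basePt n)) atTop
        (𝓝 (Pi.single (0 : Fin (n + 1)) (1 : ℝ)))) ∧
    ((∃ sLim : ℝ, Tendsto s atTop (𝓝 sLim)) → Tendsto (fun k => ‖v k‖) atTop atTop →
      ∃ lam : ℕ → ℝ, Tendsto (fun k => lam k • lorAct (g k)⁻¹ (basePt n)) atTop
        (𝓝 (Pi.single (0 : Fin (n + 1)) (1 : ℝ)))) ∧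
    (Tendsto s atTop atTop → Tendsto (fun k => ‖v k‖) atTop atTop →
      ∃ lam : ℕ → ℝ, Tendsto (fun k => lam k • lorAct (g k)⁻¹ (basePt n)) atTop
        (𝓝 (Pi.single (0 : Fin (n + 1)) (1 : ℝ)))) ∧
    (Tendsto s atTop atTop → ∀ vLim : Fin (n + 1) → ℝ, vLim 0 = 0 → vLim (Fin.last n) = 0 →
      Tendsto v atTop (𝓝 vLim) →
      (∃ lam : ℕ → ℝ, Tendsto (fun k => lam k • lorAct (g k)⁻¹ (basePt n)) atTop
        (𝓝 (lorAct (Nu vLim)⁻¹ (Pi.single (Fin.last n) (1 : ℝ))))) ∧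
      ∀ c : ℝ, lorAct (Nu vLim)⁻¹ (Pi.single (Fin.last n) (1 : ℝ))
        ≠ c • (Pi.single (0 : Fin (n + 1)) (1 : ℝ) : Fin (n + 1) → ℝ)) := by
  have hl0 : Fin.last n ≠ 0 := by
    intro h
    have := congrArg Fin.val h
    simp at this; omega
  have hS : ∀ k, 0 ≤ ∑ j, v k j * v k j := fun k =>
    Finset.sum_nonneg fun j _ => mul_self_nonneg _
  have hE : ∀ t : ℝ, Real.exp (-t) * Real.exp t = 1 := fun t => by
    rw [← Real.exp_add]; simp
  have hw : ∀ k, lorAct (g k)⁻¹ (basePt n) = fun i => if i = 0 then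
      Real.exp (-s k) + (∑ j, v k j * v k j) / 2 * Real.exp (s k)
      else if i = Fin.last n then -Real.exp (s k) else (-Real.exp (s k)) * v k i := by
    intro k
    apply lorAct_inv_eq
    rw [hg, lorAct_mul', hNu _ (hv k).1 (hv k).2, hA, sum_aux n _ (hv k).1 (hv k).2]
    funext i
    simp only [basePt, if_true, if_neg hl0]
    split_ifs with h h'
    · linear_combination hE (s k)
    · linear_combination -hE (s k)
    · ring
  have hRn : Tendsto (fun k => ‖v k‖) atTop atTop →
      Tendsto (fun k => Real.exp (-s k) ^ 2 + (∑ j, v k j * v k j) / 2) atTop atTop := by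
    intro h
    have h2 : Tendsto (fun k => ‖v k‖ ^ 2 / 2) atTop atTop :=
      ((tendsto_pow_atTop two_ne_zero).comp h).atTop_div_const (by norm_num)
    refine tendsto_atTop_mono (fun k => ?_) h2
    have h3 : ‖v k‖ ≤ Real.sqrt (∑ j, v k j * v k j) := by
      rw [pi_norm_le_iff_of_nonneg (Real.sqrt_nonneg _)]
      intro i
      apply Real.le_sqrt_of_sq_le
      rw [Real.norm_eq_abs, sq_abs, sq]
      exact Finset.single_le_sum (f := fun j => v k j * v k j)
          (fun j _ => mul_self_nonneg _) (Finset.mem_univ i)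
    have h4 : ‖v k‖ ^ 2 ≤ ∑ j, v k j * v k j := by
      rw [← Real.sq_sqrt (hS k)]
      gcongr
    have := sq_nonneg (Real.exp (-s k))
    linarith
  refine ⟨fun h => ?_, fun _ h => ?_, fun _ h => ?_, fun h u hu0 hu1 hu => ?_⟩
  · apply lim_aux n hn s v _ hw
    have h1 : Tendsto (fun k => Real.exp (-s k) ^ 2) atTop atTop :=
      (tendsto_pow_atTop two_ne_zero).comp
        (Real.tendsto_exp_atTop.comp (tendsto_neg_atBot_atTop.comp h))
    refine tendsto_atTop_mono (fun k => ?_) h1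
    have := hS k
    linarith
  · exact lim_aux n hn s v _ hw (hRn h)
  · exact lim_aux n hn s v _ hw (hRn h)
  · have hN : lorAct (Nu u)⁻¹ (Pi.single (Fin.last n) (1 : ℝ)) = fun i => if i = 0 then
        -((∑ j, u j * u j) / 2) else if i = Fin.last n then 1 else 1 * u i := by
      apply lorAct_inv_eq
      rw [hNu _ hu0 hu1, sum_aux n _ hu0 hu1]
      funext i
      simp only [if_true, if_neg hl0, Pi.single_apply]
      split_ifs with h h' h'
      · exact absurd (h'.symm.trans h) hl0
      · ring
      · rfl
      · ring
    rw [hN]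
    refine ⟨⟨fun k => -Real.exp (-s k), ?_⟩, fun c hc => ?_⟩
    · rw [tendsto_pi_nhds]
      have hui := tendsto_pi_nhds.1 hu
      intro i
      by_cases hi : i = 0
      · subst hi
        have h1 : Tendsto (fun k => Real.exp (-s k)) atTop (𝓝 0) :=
          Real.tendsto_exp_neg_atTop_nhds_zero.comp h
        have h2 : Tendsto (fun k => ∑ j, v k j * v k j) atTop (𝓝 (∑ j, u j * u j)) :=
          tendsto_finsetSum _ fun j _ => (hui j).mul (hui j)
        have h3 := ((h1.pow 2).add (h2.div_const 2)).neg
        simp only [if_true]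
        rw [show -((∑ j, u j * u j) / 2) = -(0 ^ 2 + (∑ j, u j * u j) / 2) by ring]
        refine h3.congr fun k => ?_
        simp only [hw, Pi.smul_apply, smul_eq_mul, if_true]
        linear_combination ((∑ j, v k j * v k j) / 2) * hE (s k)
      by_cases hl : i = Fin.last n
      · simp only [hw, Pi.smul_apply, smul_eq_mul, if_neg hi, if_pos hl]
        refine tendsto_const_nhds.congr fun k => ?_
        linear_combination -hE (s k)
      · simp only [hw, Pi.smul_apply, smul_eq_mul, if_neg hi, if_neg hl, one_mul]
        refine (hui i).congr fun k => ?_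
        linear_combination (-v k i) * hE (s k)
    · have := congrFun hc (Fin.last n)
      simp [hl0] at this
end
end

section
/- Let n ≥ 2 and let q be the Lorentzian quadratic form q(x) = 2x₁x_{n+1} + x₂² + ⋯ + xₙ² on ℝ^{n+1}. Let u₁, …, u_m be nonzero vectors of ℝ^{n+1} with q(uᵢ) = 0 for every i, and assume that the linear span of {u₁, …, u_m} has dimension at least 3. Then the subgroup of O(1,n) leaving each of the lines ℝu₁, …, ℝu_m invariant, namely {g ∈ O(1,n) : for every i there exists λ ∈ ℝ with g(uᵢ) = λ·uᵢ}, is a compact subset of the space of linear automorphisms of ℝ^{n+1}. -/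
open Matrix Filter Topology Bornology

noncomputable section

theorem lorB_add_left (n : ℕ) (x y z : Fin (n + 1) → ℝ) :
    lorB n (x + y) z = lorB n x z + lorB n y z := by
  unfold lorB
  have : ∀ i : Fin (n + 1), (if i ≠ 0 ∧ i ≠ Fin.last n then (x + y) i * z i else 0) =
      (if i ≠ 0 ∧ i ≠ Fin.last n then x i * z i else 0) +
      (if i ≠ 0 ∧ i ≠ Fin.last n then y i * z i else 0) := by
    intro i
    split_ifs
    · simp [add_mul]
    · simp
  rw [Finset.sum_congr rfl fun i _ => this i, Finset.sum_add_distrib]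
  simp only [Pi.add_apply]
  ring

theorem lorB_smul_left (n : ℕ) (a : ℝ) (x z : Fin (n + 1) → ℝ) :
    lorB n (a • x) z = a * lorB n x z := by
  unfold lorB
  have : ∀ i : Fin (n + 1), (if i ≠ 0 ∧ i ≠ Fin.last n then (a • x) i * z i else 0) =
      a * (if i ≠ 0 ∧ i ≠ Fin.last n then x i * z i else 0) := by
    intro i
    split_ifs
    · simp [mul_assoc]
    · simp
  rw [Finset.sum_congr rfl fun i _ => this i, ← Finset.mul_sum]
  simp only [Pi.smul_apply, smul_eq_mul]
  ring

theorem lorB_comm (n : ℕ) (x y : Fin (n + 1) → ℝ) : lorB n x y = lorB n y x := by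
  unfold lorB
  simp only [mul_comm (x _) (y _)]
  ring

theorem lorB_add_right (n : ℕ) (x y z : Fin (n + 1) → ℝ) :
    lorB n z (x + y) = lorB n z x + lorB n z y := by
  rw [lorB_comm, lorB_add_left, lorB_comm n x, lorB_comm n y]

theorem lorB_smul_right (n : ℕ) (a : ℝ) (x z : Fin (n + 1) → ℝ) :
    lorB n z (a • x) = a * lorB n z x := by
  rw [lorB_comm, lorB_smul_left, lorB_comm n x]

theorem lorQ_eq (n : ℕ) (x : Fin (n + 1) → ℝ) : lorQ n x = lorB n x x := by
  unfold lorB lorQ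
  simp only [← sq]
  ring

theorem lorB_eq_polar (n : ℕ) (x y : Fin (n + 1) → ℝ) :
    lorB n x y = (lorQ n (x + y) - lorQ n x - lorQ n y) / 2 := by
  simp only [lorQ_eq, lorB_add_left, lorB_add_right, lorB_comm n y x]
  ring

theorem lor_pos (n : ℕ) (w y : Fin (n + 1) → ℝ) (hw : lorQ n w < 0)
    (hwy : lorB n y w = 0) (hy : y ≠ 0) : 0 < lorQ n y := by
  by_contra hcon
  push Not at hcon
  apply hy
  have hsum : ∀ f : Fin (n + 1) → ℝ,
      (∑ i : Fin (n + 1), if i ≠ 0 ∧ i ≠ Fin.last n then f i else 0) =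
      ∑ i ∈ Finset.univ.filter (fun i : Fin (n + 1) => i ≠ 0 ∧ i ≠ Fin.last n), f i := by
    intro f
    rw [Finset.sum_filter]
  unfold lorQ at hw hcon
  unfold lorB at hwy
  rw [hsum] at hw hcon hwy
  set S := Finset.univ.filter (fun i : Fin (n + 1) => i ≠ 0 ∧ i ≠ Fin.last n) with hS
  have hcs := Finset.sum_mul_sq_le_sq_mul_sq S y w
  have hY : 0 ≤ ∑ i ∈ S, y i ^ 2 := Finset.sum_nonneg fun i _ => sq_nonneg _
  have hW : 0 ≤ ∑ i ∈ S, w i ^ 2 := Finset.sum_nonneg fun i _ => sq_nonneg _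
  have hzero : ∑ i ∈ S, y i ^ 2 = 0 → ∀ i ∈ S, y i = 0 := by
    intro h i hi
    have := (Finset.sum_eq_zero_iff_of_nonneg (fun i _ => sq_nonneg (y i))).1 h i hi
    exact pow_eq_zero_iff (two_ne_zero) |>.1 this
  generalize (∑ i ∈ S, y i ^ 2) = Y at *
  generalize (∑ i ∈ S, w i ^ 2) = W at *
  generalize (∑ i ∈ S, y i * w i) = C at *
  have hC : C = -(y 0 * w (Fin.last n) + y (Fin.last n) * w 0) := by linarith
  have hw0 : w 0 * w (Fin.last n) < 0 := by linarith
  have hY2 : Y ≤ -2 * (y 0 * y (Fin.last n)) := by linarith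
  have hW2 : W < -2 * (w 0 * w (Fin.last n)) := by linarith
  have hyy : y 0 * y (Fin.last n) = 0 := by
    by_contra hne
    have hpos : 0 < -2 * (y 0 * y (Fin.last n)) :=
      lt_of_le_of_ne (le_trans hY hY2) (fun h => hne (by linarith))
    have h1 : Y * W ≤ (-2 * (y 0 * y (Fin.last n))) * W := mul_le_mul_of_nonneg_right hY2 hW
    have h2 : (-2 * (y 0 * y (Fin.last n))) * W <
      (-2 * (y 0 * y (Fin.last n))) * (-2 * (w 0 * w (Fin.last n))) :=
      mul_lt_mul_of_pos_left hW2 hpos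
    rw [hC] at hcs
    nlinarith [sq_nonneg (y 0 * w (Fin.last n) - y (Fin.last n) * w 0)]
  have hY0 : Y = 0 := by linarith
  have hC0 : y 0 * w (Fin.last n) + y (Fin.last n) * w 0 = 0 := by
    rw [hY0, zero_mul, hC] at hcs
    have := le_antisymm hcs (sq_nonneg _)
    have := pow_eq_zero_iff (two_ne_zero) |>.1 this
    linarith
  have hwa : w 0 ≠ 0 := by rintro h; simp [h] at hw0
  have hwb : w (Fin.last n) ≠ 0 := by rintro h; simp [h] at hw0
  have h00 : y 0 = 0 ∧ y (Fin.last n) = 0 := by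
    rcases mul_eq_zero.1 hyy with h | h
    · refine ⟨h, ?_⟩
      rw [h] at hC0
      simpa [hwa] using hC0
    · refine ⟨?_, h⟩
      rw [h] at hC0
      simpa [hwb] using hC0
  funext i
  by_cases h1 : i = 0
  · rw [h1]; exact h00.1
  by_cases h2 : i = Fin.last n
  · rw [h2]; exact h00.2
  exact hzero hY0 i (by simp [hS, h1, h2])

theorem lorQ_basePt (n : ℕ) (hn : 2 ≤ n) : lorQ n (basePt n) < 0 := by
  have h : Fin.last n ≠ 0 := by
    intro h
    have := congrArg Fin.val h
    simp at this
    omega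
  unfold lorQ
  rw [Finset.sum_eq_zero]
  · simp [basePt, h]
  · intro i _
    split_ifs with hi
    · simp [basePt, hi.1, hi.2]
    · rfl

theorem lightlike_B_ne (n : ℕ) (hn : 2 ≤ n) (u v : Fin (n + 1) → ℝ)
    (hu : lorQ n u = 0) (hv : lorQ n v = 0)
    (hli : ∀ a b : ℝ, a • u + b • v = 0 → a = 0 ∧ b = 0) : lorB n u v ≠ 0 := by
  intro hB
  have ho := lorQ_basePt n hn
  have hv0 : v ≠ 0 := by
    rintro rfl
    simpa using hli 0 1 (by simp)
  by_cases hz : lorB n v (basePt n) • u + (-lorB n u (basePt n)) • v = 0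
  · have := lor_pos n _ v ho (hli _ _ hz).1 hv0
    linarith
  · have := lor_pos n _ _ ho (by simp only [lorB_add_left, lorB_smul_left]; ring) hz
    rw [lorQ_eq] at this hu hv
    simp only [lorB_add_left, lorB_smul_left, lorB_add_right, lorB_smul_right, lorB_comm n v u,
      hB, hu, hv] at this
    simp at this

/-- positive definite form attached to a timelike vector -/
def lorP (n : ℕ) (w x : Fin (n + 1) → ℝ) : ℝ := -lorQ n w * lorQ n x + 2 * lorB n x w ^ 2

theorem lorP_pos (n : ℕ) (w x : Fin (n + 1) → ℝ) (hw : lorQ n w < 0) (hx : x ≠ 0) :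
    0 < lorP n w x := by
  obtain ⟨a, y, hy, rfl⟩ : ∃ (a : ℝ) (y : Fin (n + 1) → ℝ), lorB n y w = 0 ∧ x = a • w + y := by
    refine ⟨lorB n x w / lorQ n w, x + (-(lorB n x w / lorQ n w)) • w, ?_, ?_⟩
    · rw [lorB_add_left, lorB_smul_left, ← lorQ_eq]
      field_simp [hw.ne]
      ring
    · simp
  have hval : lorP n w (a • w + y) = a ^ 2 * lorQ n w ^ 2 + -lorQ n w * lorQ n y := by
    unfold lorP
    simp only [lorQ_eq, lorB_add_left, lorB_smul_left, lorB_add_right, lorB_smul_right,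
      lorB_comm n w y, hy]
    ring
  rw [hval]
  by_cases h0 : y = 0
  · subst h0
    have ha : a ≠ 0 := by
      rintro rfl
      simp at hx
    have hq : lorQ n (0 : Fin (n + 1) → ℝ) = 0 := by simp [lorQ]
    rw [hq]
    have hwn := hw.ne
    rw [mul_zero, add_zero]
    positivity
  · have := lor_pos n w y hw hy h0
    have h2 : 0 < -lorQ n w := by linarith
    positivity

theorem lorB_continuous (n : ℕ) (w : Fin (n + 1) → ℝ) : Continuous fun x => lorB n x w := by
  unfold lorB
  refine Continuous.add (by fun_prop) (continuous_finsetSum _ fun i _ => ?_)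
  split_ifs <;> fun_prop

theorem lorQ_continuous (n : ℕ) : Continuous fun x => lorQ n x := by
  unfold lorQ
  refine Continuous.add (by fun_prop) (continuous_finsetSum _ fun i _ => ?_)
  split_ifs <;> fun_prop

theorem lorP_continuous (n : ℕ) (w : Fin (n + 1) → ℝ) : Continuous fun x => lorP n w x := by
  unfold lorP
  have := lorB_continuous n w
  have := lorQ_continuous n
  fun_prop

theorem lorP_smul (n : ℕ) (w x : Fin (n + 1) → ℝ) (a : ℝ) :
    lorP n w (a • x) = a ^ 2 * lorP n w x := by
  unfold lorP
  simp only [lorQ_eq, lorB_smul_left, lorB_smul_right]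
  ring

theorem lorP_bound (n : ℕ) (w : Fin (n + 1) → ℝ) (hw : lorQ n w < 0) :
    ∃ δ > 0, ∀ x, δ * ‖x‖ ^ 2 ≤ lorP n w x := by
  obtain ⟨z, hz, hmin⟩ := (isCompact_sphere (0 : Fin (n + 1) → ℝ) 1).exists_isMinOn
    (NormedSpace.sphere_nonempty.2 zero_le_one) (lorP_continuous n w).continuousOn
  have hz0 : z ≠ 0 := by
    rintro rfl
    simp at hz
  refine ⟨lorP n w z, lorP_pos n w z hw hz0, fun x => ?_⟩
  by_cases hx : x = 0
  · subst hx
    simp [lorP, lorQ, lorB]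
  · have hn : ‖x‖ ≠ 0 := norm_ne_zero_iff.2 hx
    have h1 : ‖x‖⁻¹ • x ∈ Metric.sphere (0 : Fin (n + 1) → ℝ) 1 := by
      simp [norm_smul, hn]
    have h2 : lorP n w z ≤ lorP n w (‖x‖⁻¹ • x) := hmin h1
    rw [lorP_smul] at h2
    calc lorP n w z * ‖x‖ ^ 2 ≤ (‖x‖⁻¹ ^ 2 * lorP n w x) * ‖x‖ ^ 2 := by gcongr
      _ = lorP n w x := by field_simp

/-- There is a timelike vector preserved up to sign by the stabilizer. -/
theorem exists_timelike
    (n : ℕ) (hn : 2 ≤ n) (m : ℕ) (u : Fin m → Fin (n + 1) → ℝ)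
    (huq : ∀ i, lorQ n (u i) = 0)
    (hspan : 3 ≤ Module.finrank ℝ (Submodule.span ℝ (Set.range u))) :
    ∃ w, lorQ n w < 0 ∧ ∀ M : Matrix (Fin (n + 1)) (Fin (n + 1)) ℝ,
      (∀ x, lorQ n (M.mulVec x) = lorQ n x) → (∀ i, ∃ c : ℝ, M.mulVec (u i) = c • u i) →
      ∃ c : ℝ, c ^ 2 = 1 ∧ M.mulVec w = c • w := by
  obtain ⟨f, hf, -, hli⟩ := Submodule.exists_fun_fin_finrank_span_eq ℝ (Set.range u)
  have hBne : ∀ i j, i ≠ j → lorB n (f i) (f j) ≠ 0 := by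
    intro i j hij
    have hq : ∀ i, lorQ n (f i) = 0 := by
      intro i
      obtain ⟨k, hk⟩ := hf i
      rw [← hk]; exact huq k
    refine lightlike_B_ne n hn _ _ (hq i) (hq j) ?_
    have hp : LinearIndependent ℝ ![f i, f j] := by
      have := hli.comp ![i, j] (by
        intro a b hab
        fin_cases a <;> fin_cases b <;> simp_all [eq_comm])
      have he : f ∘ ![i, j] = ![f i, f j] := by
        funext a
        fin_cases a <;> rfl
      rw [he] at this
      exact this
    exact LinearIndependent.pair_iff.1 hp
  have hq : ∀ i, lorB n (f i) (f i) = 0 := by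
    intro i
    obtain ⟨k, hk⟩ := hf i
    rw [← hk, ← lorQ_eq]; exact huq k
  let i0 : Fin (Module.finrank ℝ (Submodule.span ℝ (Set.range u))) := ⟨0, by omega⟩
  let i1 : Fin (Module.finrank ℝ (Submodule.span ℝ (Set.range u))) := ⟨1, by omega⟩
  let i2 : Fin (Module.finrank ℝ (Submodule.span ℝ (Set.range u))) := ⟨2, by omega⟩
  have h01 := hBne i0 i1 (by simp [i0, i1])
  have h02 := hBne i0 i2 (by simp [i0, i2])
  have h12 := hBne i1 i2 (by simp [i1, i2])
  refine ⟨f i0 + (-lorB n (f i0) (f i1)) • f i1, ?_, ?_⟩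
  · rw [lorQ_eq]
    simp only [lorB_add_left, lorB_smul_left, lorB_add_right, lorB_smul_right,
      lorB_comm n (f i1) (f i0), hq]
    nlinarith [sq_pos_of_ne_zero h01]
  · intro M hM hMu
    have hMf : ∀ i, ∃ c : ℝ, M.mulVec (f i) = c • f i := by
      intro i
      obtain ⟨k, hk⟩ := hf i
      rw [← hk]; exact hMu k
    have hMB : ∀ x y, lorB n (M.mulVec x) (M.mulVec y) = lorB n x y := by
      intro x y
      rw [lorB_eq_polar, lorB_eq_polar, ← Matrix.mulVec_add, hM, hM, hM]
    choose c hc using hMf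
    have key : ∀ i j, lorB n (f i) (f j) ≠ 0 → c i * c j = 1 := by
      intro i j h
      have := hMB (f i) (f j)
      rw [hc, hc, lorB_smul_left, lorB_smul_right] at this
      apply mul_right_cancel₀ h
      linarith
    have k01 := key _ _ h01
    have k02 := key _ _ h02
    have k12 := key _ _ h12
    have hc2 : c i2 ≠ 0 := right_ne_zero_of_mul_eq_one k02
    have e : c i0 = c i1 := mul_right_cancel₀ hc2 (k02.trans k12.symm)
    refine ⟨c i0, ?_, ?_⟩
    · rw [← k01, ← e]; ring
    · rw [Matrix.mulVec_add, Matrix.mulVec_smul, hc, hc, ← e, smul_add, smul_comm]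

/-- Let `n ≥ 2` and let `u₁, …, u_m` be nonzero lightlike vectors of `ℝ^{n+1}`
whose linear span has dimension at least `3`. Then the subgroup of `O(1,n)` leaving each of the
lines `ℝuᵢ` invariant is a compact subset of the space of linear automorphisms of `ℝ^{n+1}`
(viewed inside the space of matrices). -/
theorem isCompact_stabilizer_of_lightlike_lines
    (n : ℕ) (hn : 2 ≤ n) (m : ℕ) (u : Fin m → Fin (n + 1) → ℝ)
    (hu0 : ∀ i, u i ≠ 0) (huq : ∀ i, lorQ n (u i) = 0)
    (hspan : 3 ≤ Module.finrank ℝ (Submodule.span ℝ (Set.range u))) :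
    IsCompact {M : Matrix (Fin (n + 1)) (Fin (n + 1)) ℝ |
      IsUnit M ∧ (∀ x, lorQ n (M.mulVec x) = lorQ n x) ∧
      ∀ i, ∃ c : ℝ, M.mulVec (u i) = c • u i} := by
  obtain ⟨w, hw, hM⟩ := exists_timelike n hn m u huq hspan
  obtain ⟨δ, hδ, hb⟩ := lorP_bound n w hw
  have hP : ∀ M : Matrix (Fin (n + 1)) (Fin (n + 1)) ℝ,
      (∀ x, lorQ n (M.mulVec x) = lorQ n x) → (∀ i, ∃ c : ℝ, M.mulVec (u i) = c • u i) →
      ∀ x, lorP n w (M.mulVec x) = lorP n w x := by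
    intro M h1 h2 x
    obtain ⟨c, hc, hcw⟩ := hM M h1 h2
    have hB : lorB n (M.mulVec x) (M.mulVec w) = lorB n x w := by
      rw [lorB_eq_polar, lorB_eq_polar, ← Matrix.mulVec_add, h1, h1, h1]
    rw [hcw, lorB_smul_right] at hB
    unfold lorP
    rw [h1, ← hB, mul_pow, hc, one_mul]
  have hset : {M : Matrix (Fin (n + 1)) (Fin (n + 1)) ℝ |
      IsUnit M ∧ (∀ x, lorQ n (M.mulVec x) = lorQ n x) ∧
      ∀ i, ∃ c : ℝ, M.mulVec (u i) = c • u i} =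
      {M : Matrix (Fin (n + 1)) (Fin (n + 1)) ℝ |
      (∀ x, lorQ n (M.mulVec x) = lorQ n x) ∧ ∀ i, M.mulVec (u i) ∈ Submodule.span ℝ {u i}} := by
    ext M
    simp only [Set.mem_ofPred_eq, Submodule.mem_span_singleton]
    constructor
    · rintro ⟨-, h1, h2⟩
      exact ⟨h1, fun i => (h2 i).imp fun c hc => hc.symm⟩
    · rintro ⟨h1, h2⟩
      have h2' : ∀ i, ∃ c : ℝ, M.mulVec (u i) = c • u i :=
        fun i => (h2 i).imp fun c hc => hc.symm
      refine ⟨?_, h1, h2'⟩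
      rw [← Matrix.mulVec_injective_iff_isUnit]
      intro x y hxy
      by_contra hne
      have hpos := lorP_pos n w (x - y) hw (sub_ne_zero.2 hne)
      have hxy' : M.mulVec x = M.mulVec y := hxy
      rw [← hP M h1 h2', Matrix.mulVec_sub, hxy', sub_self] at hpos
      simp [lorP, lorQ, lorB] at hpos
  have hclosed : IsClosed {M : Matrix (Fin (n + 1)) (Fin (n + 1)) ℝ |
      (∀ x, lorQ n (M.mulVec x) = lorQ n x) ∧
      ∀ i, M.mulVec (u i) ∈ Submodule.span ℝ {u i}} := by
    have hcont : ∀ x : Fin (n + 1) → ℝ,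
        Continuous fun M : Matrix (Fin (n + 1)) (Fin (n + 1)) ℝ => M.mulVec x :=
      fun x => continuous_id.matrix_mulVec continuous_const
    simp only [Set.ofPred_and, Set.ofPred_forall]
    refine IsClosed.inter (isClosed_iInter fun x => ?_) (isClosed_iInter fun i => ?_)
    · exact isClosed_eq ((lorQ_continuous n).comp (hcont x)) continuous_const
    · exact (Submodule.closed_of_finiteDimensional (Submodule.span ℝ {u i})).preimage
        (hcont (u i))
  have hK : IsCompact (Set.pi Set.univ fun _ : Fin (n + 1) => Set.pi Set.univ
      fun j : Fin (n + 1) => Metric.closedBall (0 : ℝ)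
        (Real.sqrt (lorP n w (Pi.single j 1) / δ))) :=
    isCompact_univ_pi fun _ => isCompact_univ_pi fun _ => isCompact_closedBall _ _
  rw [hset]
  refine IsCompact.of_isClosed_subset (X := Matrix (Fin (n + 1)) (Fin (n + 1)) ℝ)
    hK hclosed ?_
  rintro M ⟨h1, h2⟩ i - j -
  have h2' : ∀ i, ∃ c : ℝ, M.mulVec (u i) = c • u i := fun i =>
    (Submodule.mem_span_singleton.1 (h2 i)).imp fun c hc => hc.symm
  rw [mem_closedBall_zero_iff]
  have h3 := hb (M.mulVec (Pi.single j 1))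
  rw [hP M h1 h2'] at h3
  have h4 : ‖M i j‖ ≤ ‖M.mulVec (Pi.single j 1)‖ := by
    have := norm_le_pi_norm (M.mulVec (Pi.single j 1)) i
    simpa using this
  refine h4.trans (Real.le_sqrt_of_sq_le ?_)
  rw [le_div_iff₀ hδ]
  linarith
end
end
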